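/- Let i ≥ 1 and j ≥ 2 be integers and let r_i, r_j be independent random variables with r_i ∼ χ_{2i} and r_j ∼ χ_{2j}. Then E[ln((r_i + r_j)/r_j)] ≤ √(i/(j−1)); explicitly, ∫_0^∞ ∫_0^∞ ln((√x + √y)/√y) · ρ_i(x) ρ_j(y) dx dy ≤ √(i/(j−1)). -/

import Mathlib

open MeasureTheory Finset

/-- Density of the chi-squared distribution with `2m` degrees of freedom:
`ρ_m(q) = q^{m−1} e^{−q/2} / (2^m (m−1)!)` on `(0,∞)`. A random variable `r`
is χ_{2m}-distributed iff `r ≥ 0` and `r²` has this density; below `r = √x`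
with `x ∼ χ²_{2m}`. -/
noncomputable def chi2Density (m : ℕ) (q : ℝ) : ℝ :=
  q ^ (m - 1) * Real.exp (-q / 2) / (2 ^ m * Nat.factorial (m - 1))

/-!
For independent nonnegative `X` and `Y`, `log (1 + t) ≤ t` and Jensen's inequality for `√` give
`𝔼[log ((√X + √Y) / √Y)] ≤ 𝔼[√X] * 𝔼[√Y⁻¹] ≤ √(𝔼[X] * 𝔼[Y⁻¹])`. The law `χ²_{2m}` is the gamma
law of shape `m` and rate `1 / 2`, and a gamma law of shape `a` and rate `r` has mean `a / r` and,
for `1 < a`, inverse moment `r / (a - 1)`.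
-/

open ProbabilityTheory

section SqrtMoments

variable {α : Type*} [MeasurableSpace α] {μ : Measure α} {f : α → ℝ}

theorem integrable_sqrt [IsFiniteMeasure μ] (hf : Integrable f μ) :
    Integrable (fun x ↦ √(f x)) μ := by
  refine ((integrable_const 1).add hf.abs).mono'
    (Real.continuous_sqrt.comp_aestronglyMeasurable hf.aestronglyMeasurable) (.of_forall fun x ↦ ?_)
  rw [Real.norm_of_nonneg (Real.sqrt_nonneg _), Pi.add_apply, Real.sqrt_le_left (by positivity)]
  nlinarith [le_abs_self (f x), abs_nonneg (f x)]

theorem integral_sqrt_le_sqrt_integral [IsProbabilityMeasure μ] (hf : Integrable f μ)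
    (hf₀ : 0 ≤ᵐ[μ] f) : ∫ x, √(f x) ∂μ ≤ √(∫ x, f x ∂μ) :=
  Real.strictConcaveOn_sqrt.concaveOn.le_map_integral Real.continuous_sqrt.continuousOn
    isClosed_Ici hf₀ hf (integrable_sqrt hf)

end SqrtMoments

section LogRatio

variable {s t : ℝ}

theorem log_add_div_self_nonneg (hs : 0 ≤ s) (ht : 0 ≤ t) : 0 ≤ Real.log ((s + t) / t) := by
  obtain rfl | ht := ht.eq_or_lt
  · simp
  · exact Real.log_nonneg ((one_le_div ht).2 (le_add_of_nonneg_left hs))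

theorem log_add_div_self_le (hs : 0 ≤ s) (ht : 0 ≤ t) : Real.log ((s + t) / t) ≤ s / t := by
  obtain rfl | ht := ht.eq_or_lt
  · simp
  · calc
      Real.log ((s + t) / t) ≤ (s + t) / t - 1 := Real.log_le_sub_one_of_pos (by positivity)
      _ = s / t := by rw [add_div, div_self ht.ne', add_sub_cancel_right]

end LogRatio

theorem integral_log_sqrt_add_sqrt_div_sqrt_le {μ ν : Measure ℝ}
    [IsProbabilityMeasure μ] [IsProbabilityMeasure ν]
    (hμ : Integrable (fun x ↦ x) μ) (hν : Integrable (fun y ↦ y⁻¹) ν)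
    (hμ₀ : ∀ᵐ x ∂μ, 0 ≤ x) (hν₀ : ∀ᵐ y ∂ν, 0 ≤ y) :
    ∫ x, ∫ y, Real.log ((√x + √y) / √y) ∂ν ∂μ ≤ √((∫ x, x ∂μ) * ∫ y, y⁻¹ ∂ν) := by
  have log_nonneg (x y : ℝ) : 0 ≤ Real.log ((√x + √y) / √y) :=
    log_add_div_self_nonneg (Real.sqrt_nonneg x) (Real.sqrt_nonneg y)
  have log_le (x y : ℝ) : Real.log ((√x + √y) / √y) ≤ √x * √y⁻¹ := by
    rw [Real.sqrt_inv, ← div_eq_mul_inv]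
    exact log_add_div_self_le (Real.sqrt_nonneg x) (Real.sqrt_nonneg y)
  have inner_le (x : ℝ) : ∫ y, Real.log ((√x + √y) / √y) ∂ν ≤ ∫ y, √x * √y⁻¹ ∂ν :=
    integral_mono_of_nonneg (.of_forall (log_nonneg x)) ((integrable_sqrt hν).const_mul _)
      (.of_forall (log_le x))
  calc
    ∫ x, ∫ y, Real.log ((√x + √y) / √y) ∂ν ∂μ
    _ ≤ ∫ x, √x * ∫ y, √y⁻¹ ∂ν ∂μ :=
      integral_mono_of_nonneg (.of_forall fun x ↦ integral_nonneg (log_nonneg x))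
        ((integrable_sqrt hμ).mul_const _)
        (.of_forall fun x ↦ (inner_le x).trans_eq (integral_const_mul _ _))
    _ = (∫ x, √x ∂μ) * ∫ y, √y⁻¹ ∂ν := integral_mul_const _ _
    _ ≤ √(∫ x, x ∂μ) * √(∫ y, y⁻¹ ∂ν) := by
      gcongr
      · exact integral_sqrt_le_sqrt_integral hμ hμ₀
      · exact integral_sqrt_le_sqrt_integral hν (hν₀.mono fun _ ↦ inv_nonneg.2)
    _ = √((∫ x, x ∂μ) * ∫ y, y⁻¹ ∂ν) :=
      (Real.sqrt_mul (integral_nonneg_of_ae hμ₀) _).symm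

section GammaMoments

variable {a r : ℝ}

theorem measurable_gammaPDF (a r : ℝ) : Measurable (gammaPDF a r) :=
  (measurable_gammaPDFReal a r).ennreal_ofReal

theorem integral_gammaMeasure (ha : 0 < a) (hr : 0 < r) (f : ℝ → ℝ) :
    ∫ x, f x ∂gammaMeasure a r = ∫ x in Set.Ioi 0, gammaPDFReal a r x * f x := by
  rw [gammaMeasure, integral_withDensity_eq_integral_toReal_smul (measurable_gammaPDF a r)
    (.of_forall fun _ ↦ ENNReal.ofReal_lt_top), ← integral_Ici_eq_integral_Ioi,
    setIntegral_eq_integral_of_forall_compl_eq_zero]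
  · simp only [gammaPDF, ENNReal.toReal_ofReal (gammaPDFReal_nonneg ha hr _), smul_eq_mul]
  · intro x hx
    rw [gammaPDFReal, if_neg (Set.mem_Ici.not.1 hx), zero_mul]

theorem ae_nonneg_gammaMeasure (a r : ℝ) : ∀ᵐ x ∂gammaMeasure a r, 0 ≤ x := by
  rw [gammaMeasure, ae_withDensity_iff (measurable_gammaPDF a r)]
  exact .of_forall fun x hx ↦ not_lt.1 (mt gammaPDF_of_neg hx)

theorem integral_rpow_gammaMeasure {t : ℝ} (ha : 0 < a) (hr : 0 < r) (hat : 0 < a + t) :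
    ∫ x, x ^ t ∂gammaMeasure a r = Real.Gamma (a + t) / (r ^ t * Real.Gamma a) := by
  have pdf_mul_rpow (x : ℝ) (hx : x ∈ Set.Ioi 0) : gammaPDFReal a r x * x ^ t =
      r ^ a / Real.Gamma a * (x ^ (a + t - 1) * Real.exp (-(r * x))) := by
    rw [gammaPDFReal, if_pos (Set.mem_Ioi.1 hx).le, add_sub_right_comm,
      Real.rpow_add (Set.mem_Ioi.1 hx)]
    ring
  rw [integral_gammaMeasure ha hr, setIntegral_congr_fun measurableSet_Ioi pdf_mul_rpow,
    integral_const_mul, Real.integral_rpow_mul_exp_neg_mul_Ioi hat hr, one_div,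
    Real.inv_rpow hr.le, Real.rpow_add hr]
  field_simp

theorem integrable_rpow_gammaMeasure {t : ℝ} (ha : 0 < a) (hr : 0 < r) (hat : 0 < a + t) :
    Integrable (fun x ↦ x ^ t) (gammaMeasure a r) := by
  refine .of_integral_ne_zero (ne_of_gt ?_)
  rw [integral_rpow_gammaMeasure ha hr hat]
  have := Real.Gamma_pos_of_pos hat
  positivity

theorem integral_id_gammaMeasure (ha : 0 < a) (hr : 0 < r) :
    ∫ x, x ∂gammaMeasure a r = a / r := by
  have moment := integral_rpow_gammaMeasure (t := 1) ha hr (by positivity)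
  have := (Real.Gamma_pos_of_pos ha).ne'
  simp only [Real.rpow_one, Real.Gamma_add_one ha.ne'] at moment
  rw [moment]
  field_simp

theorem integral_inv_gammaMeasure (ha : 1 < a) (hr : 0 < r) :
    ∫ x, x⁻¹ ∂gammaMeasure a r = r / (a - 1) := by
  have ha₁ : 0 < a - 1 := sub_pos.2 ha
  have moment := integral_rpow_gammaMeasure (t := -1) (zero_lt_one.trans ha) hr ha₁
  have Gamma_eq : Real.Gamma a = (a - 1) * Real.Gamma (a - 1) := by
    simpa only [sub_add_cancel] using Real.Gamma_add_one ha₁.ne'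
  have := (Real.Gamma_pos_of_pos ha₁).ne'
  simp only [Real.rpow_neg_one, ← sub_eq_add_neg, Gamma_eq] at moment
  rw [moment]
  field_simp

end GammaMoments

theorem expectation_log_sum_ratio_le_general {a b r s : ℝ}
    (ha : 0 < a) (hb : 1 < b) (hr : 0 < r) (hs : 0 < s) :
    ∫ x, ∫ y, Real.log ((√x + √y) / √y) ∂gammaMeasure b s ∂gammaMeasure a r ≤
      √(a / r * (s / (b - 1))) := by
  have hb₀ : 0 < b := zero_lt_one.trans hb
  have := isProbabilityMeasure_gammaMeasure ha hr
  have := isProbabilityMeasure_gammaMeasure hb₀ hs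
  have mean_integrable : Integrable (fun x ↦ x) (gammaMeasure a r) := by
    simpa only [Real.rpow_one] using
      integrable_rpow_gammaMeasure (t := 1) ha hr (by positivity)
  have inv_integrable : Integrable (fun y ↦ y⁻¹) (gammaMeasure b s) := by
    simpa only [Real.rpow_neg_one] using
      integrable_rpow_gammaMeasure (t := -1) hb₀ hs (sub_pos.2 hb)
  rw [← integral_id_gammaMeasure ha hr, ← integral_inv_gammaMeasure hb hs]
  exact integral_log_sqrt_add_sqrt_div_sqrt_le mean_integrable inv_integrable
    (ae_nonneg_gammaMeasure a r) (ae_nonneg_gammaMeasure b s)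

section ChiSquared

variable {m : ℕ}

theorem gammaPDFReal_half_eq_chi2Density (hm : 1 ≤ m) {q : ℝ} (hq : 0 < q) :
    gammaPDFReal m (1 / 2) q = chi2Density m q := by
  obtain ⟨n, rfl⟩ := Nat.exists_eq_add_of_le' hm
  rw [gammaPDFReal, if_pos hq.le, chi2Density, Nat.add_sub_cancel, Real.rpow_natCast,
    Nat.cast_add_one, Real.Gamma_nat_eq_factorial, add_sub_cancel_right, Real.rpow_natCast,
    show -(1 / 2 * q) = -q / 2 by ring, one_div, inv_pow]
  field_simp

theorem integral_gammaMeasure_half (hm : 1 ≤ m) (f : ℝ → ℝ) :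
    ∫ q, f q ∂gammaMeasure m (1 / 2) = ∫ q in Set.Ioi 0, chi2Density m q * f q := by
  rw [integral_gammaMeasure (by exact_mod_cast hm) one_half_pos]
  exact setIntegral_congr_fun measurableSet_Ioi fun q hq ↦
    congrArg (· * f q) (gammaPDFReal_half_eq_chi2Density hm hq)

theorem integral_integral_mul_chi2Density {i j : ℕ} (hi : 1 ≤ i) (hj : 1 ≤ j) (f : ℝ → ℝ → ℝ) :
    ∫ x in Set.Ioi 0, ∫ y in Set.Ioi 0, f x y * (chi2Density i x * chi2Density j y) =
      ∫ x, ∫ y, f x y ∂gammaMeasure j (1 / 2) ∂gammaMeasure i (1 / 2) := by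
  simp only [integral_gammaMeasure_half hi, integral_gammaMeasure_half hj, ← integral_const_mul,
    mul_comm (f _ _), mul_assoc]

end ChiSquared

theorem expectation_log_sum_ratio_le (i j : ℕ) (hi : 1 ≤ i) (hj : 2 ≤ j) :
    (∫ x in Set.Ioi (0 : ℝ), ∫ y in Set.Ioi (0 : ℝ),
        Real.log ((Real.sqrt x + Real.sqrt y) / Real.sqrt y) *
          (chi2Density i x * chi2Density j y)) ≤
      Real.sqrt ((i : ℝ) / ((j : ℝ) - 1)) := by
  rw [integral_integral_mul_chi2Density hi (one_le_two.trans hj)]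
  convert expectation_log_sum_ratio_le_general (a := i) (b := j) (Nat.cast_pos.2 hi)
    (Nat.one_lt_cast.2 hj) one_half_pos one_half_pos using 2
  field_simp
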